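/- arXiv:2110.10055 — 7 statements merged into one kernel-verified Lean document; each statement's English description precedes it below -/
import Mathlib

section
/- Let α be an alphabet and let M be a deterministic finite automaton over α whose state type Q is finite. Let u and v be words over α. If there exists m ≥ 1 such that the word u ++ v^m is accepted by M, then there exists n with 1 ≤ n ≤ |Q| (the number of states of M) such that u ++ v^n is accepted by M. -/
/-!
Reading `v` acts on the states as a self-map `f`, so the automaton accepts `u ++ v^k` exactly when
the `k`-th iterate of `f` sends the state reached by `u` into the accepting set. At the first time
`n ≥ 1` this happens, the states after `1, …, n` copies of `v` are pairwise distinct: a repetition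
`f^[i] x = f^[j] x` with `i < j ≤ n` could be cut out, giving an earlier visit at time `n - j + i`.
-/

open Set

section Iterate

variable {β : Type*} {f : β → β} {x : β} {s : Set β} {l n : ℕ}

theorem iterate_injOn_Icc_of_forall_notMem (hn : f^[n] x ∈ s)
    (hmin : ∀ k ∈ Ico l n, f^[k] x ∉ s) : InjOn (f^[·] x) (Icc l n) := by
  intro i hi j hj (hij : f^[i] x = f^[j] x)
  wlog hlt : i < j generalizing i j
  · by_contra hne
    exact hne (this hj hi hij.symm (by omega)).symm
  obtain ⟨hli, -⟩ := hi
  obtain ⟨-, hjn⟩ := hj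
  have hcut : f^[n - j + i] x = f^[n] x := by
    rw [Function.iterate_add_apply, hij, ← Function.iterate_add_apply, Nat.sub_add_cancel hjn]
  exact absurd (hcut ▸ hn) (hmin _ ⟨by omega, by omega⟩)

theorem exists_iterate_mem_and_injOn_Icc (h : ∃ m, l ≤ m ∧ f^[m] x ∈ s) :
    ∃ n, l ≤ n ∧ f^[n] x ∈ s ∧ InjOn (f^[·] x) (Icc l n) := by
  classical
  obtain ⟨hle, hmem⟩ := Nat.find_spec h
  refine ⟨Nat.find h, hle, hmem, iterate_injOn_Icc_of_forall_notMem hmem ?_⟩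
  exact fun k hk hks => Nat.find_min h hk.2 ⟨hk.1, hks⟩

end Iterate

section Automaton

variable {α Q : Type*} (M : DFA α Q)

theorem evalFrom_flatten_replicate (q : Q) (v : List α) (n : ℕ) :
    M.evalFrom q (List.replicate n v).flatten = (M.evalFrom · v)^[n] q := by
  induction n generalizing q with
  | zero => rfl
  | succ n ih =>
    rw [List.replicate_succ, List.flatten_cons, M.evalFrom_of_append, ih,
      Function.iterate_succ_apply]

theorem eval_append_flatten_replicate (u v : List α) (n : ℕ) :
    M.eval (u ++ (List.replicate n v).flatten) = (M.evalFrom · v)^[n] (M.eval u) := by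
  rw [DFA.eval, M.evalFrom_of_append, evalFrom_flatten_replicate]

theorem dfa_power_pump_general (u v : List α)
    (h : ∃ m : ℕ, 1 ≤ m ∧ u ++ (List.replicate m v).flatten ∈ M.accepts) :
    ∃ n : ℕ, 1 ≤ n ∧ u ++ (List.replicate n v).flatten ∈ M.accepts ∧
      InjOn (fun k => M.eval (u ++ (List.replicate k v).flatten)) (Icc 1 n) := by
  simp only [DFA.mem_accepts, eval_append_flatten_replicate] at h ⊢
  exact exists_iterate_mem_and_injOn_Icc h

end Automaton

/-- Power-pump lemma for DFAs: if `u ++ v^m` is accepted for some `m ≥ 1`,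
then `u ++ v^n` is accepted for some `n` with `1 ≤ n ≤ |Q|`. -/
theorem dfa_power_pump {α Q : Type*} [Fintype Q] (M : DFA α Q) (u v : List α)
    (h : ∃ m : ℕ, 1 ≤ m ∧ u ++ (List.replicate m v).flatten ∈ M.accepts) :
    ∃ n : ℕ, 1 ≤ n ∧ n ≤ Fintype.card Q ∧ u ++ (List.replicate n v).flatten ∈ M.accepts := by
  obtain ⟨n, hn, hacc, hinj⟩ := dfa_power_pump_general M u v h
  have hcard : (Finset.Icc 1 n).card ≤ Fintype.card Q :=
    Finset.card_le_card_of_injOn _ (fun _ _ => Finset.mem_univ _) (by rwa [Finset.coe_Icc])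
  exact ⟨n, hn, by simpa using hcard, hacc⟩
end

section
/- Let M be a deterministic finite automaton over an alphabet α with finite state type Q and with accepting state set F, and let u and v be words over α. Then there exist natural numbers N and p with 1 ≤ p and N + p ≤ |Q|, and a set R of residues with R ⊆ {0, 1, …, p−1} and |R| ≤ |F|, such that for every m ≥ N, the word u ++ v^m is accepted by M if and only if (m mod p) ∈ R. -/
/-!
Reading `v` acts on the states as a map `f`, so the state reached on `u ++ v^m` is `f^[m] x`, where
`x` is the state reached on `u`. An orbit with finitely many points has the shape of a `ρ`: it
visits distinct points up to its first repetition `f^[N + p] x = f^[N] x`, and is periodic with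
period `p` from `N` on. The `N + p` points before the repetition are distinct states, and sending
the accepted exponents of the window `[N, N + p)` to their residues modulo `p` and to the accepting
states they reach is injective in both cases.
-/

open Function Set

theorem exists_injOn_Iio_and_mem_image_of_finite_range {β : Type*} {s : ℕ → β}
    (hs : (range s).Finite) : ∃ n, InjOn s (Iio n) ∧ s n ∈ s '' Iio n := by
  by_contra! hfresh
  have hinj (n : ℕ) : InjOn s (Iio n) := by
    induction n with
    | zero => simp
    | succ n ih =>
      rw [← Order.succ_eq_add_one, Order.Iio_succ_eq_insert, injOn_insert self_notMem_Iio]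
      exact ⟨ih, hfresh n ih⟩
  refine infinite_range_of_injective (fun i j hij => ?_) hs
  exact hinj (i + j + 1) (by simp) (by simp) hij

theorem exists_injOn_iterate_and_isPeriodicPt_of_finite_range {β : Type*} {f : β → β} {x : β}
    (hfin : (range fun n => f^[n] x).Finite) :
    ∃ N p, 0 < p ∧ InjOn (fun n => f^[n] x) (Iio (N + p)) ∧ IsPeriodicPt f p (f^[N] x) := by
  obtain ⟨n, hinj, N, hN, hNn : f^[N] x = f^[n] x⟩ :=
    exists_injOn_Iio_and_mem_image_of_finite_range hfin
  obtain ⟨p, hp, rfl⟩ := exists_pos_add_of_lt' (mem_Iio.1 hN)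
  refine ⟨N, p, hp, hinj, ?_⟩
  rw [IsPeriodicPt, IsFixedPt, ← iterate_add_apply, add_comm, hNn]

theorem iterate_eq_iterate_of_modEq {β : Type*} {f : β → β} {x : β} {N p a b : ℕ}
    (hper : IsPeriodicPt f p (f^[N] x)) (ha : N ≤ a) (hb : N ≤ b) (hab : a ≡ b [MOD p]) :
    f^[a] x = f^[b] x := by
  obtain ⟨i, rfl⟩ := Nat.exists_eq_add_of_le' ha
  obtain ⟨j, rfl⟩ := Nat.exists_eq_add_of_le' hb
  have hij : i % p = j % p := hab.add_right_cancel' N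
  rw [iterate_add_apply, iterate_add_apply, ← hper.iterate_mod_apply i, hij,
    hper.iterate_mod_apply]

theorem exists_finset_mem_iff_mod_mem_of_modEq {P : Set ℕ} {N p : ℕ} (hp : 0 < p)
    (hP : ∀ a b, N ≤ a → N ≤ b → a ≡ b [MOD p] → (a ∈ P ↔ b ∈ P)) :
    ∃ R : Finset ℕ, (∀ r ∈ R, r < p) ∧ R.card = (P ∩ Ico N (N + p)).ncard ∧
      ∀ m, N ≤ m → (m ∈ P ↔ m % p ∈ R) := by
  have hW : (P ∩ Ico N (N + p)).Finite := (finite_Ico _ _).inter_of_right P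
  have hinj : InjOn (· % p) (P ∩ Ico N (N + p)) :=
    (Nat.mod_injOn_Ico N p).mono (by simp)
  refine ⟨(hW.image (· % p)).toFinset, ?_, ?_, fun m hm => ?_⟩
  · simp only [Finite.mem_toFinset, forall_mem_image]
    exact fun m _ => Nat.mod_lt m hp
  · rw [← ncard_eq_toFinset_card _ (hW.image _), hinj.ncard_image]
  · rw [Finite.mem_toFinset]
    constructor
    · intro hmP
      have hmod : m % p ∈ (Finset.Ico N (N + p)).image (· % p) := by
        rw [Nat.image_Ico_mod, Finset.mem_range]
        exact Nat.mod_lt m hp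
      obtain ⟨k, hk, hkm⟩ := Finset.mem_image.1 hmod
      rw [Finset.mem_Ico] at hk
      exact ⟨k, ⟨(hP k m hk.1 hm hkm).2 hmP, hk⟩, hkm⟩
    · rintro ⟨k, ⟨hkP, hk⟩, hkm⟩
      exact (hP k m hk.1 hm hkm).1 hkP

theorem dfa_eval_append_flatten_replicate {α Q : Type*} (M : DFA α Q) (u v : List α) (m : ℕ) :
    M.eval (u ++ (List.replicate m v).flatten) = (M.evalFrom · v)^[m] (M.eval u) := by
  induction m with
  | zero => simp
  | succ m ih =>
    rw [List.replicate_succ', List.flatten_concat, ← List.append_assoc, DFA.eval,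
      DFA.evalFrom_of_append, ← DFA.eval, ih, iterate_succ_apply']

/-- The set of states that `M` reaches on the words `u ++ v^m`, i.e. the orbit of the state reached
on `u` under reading `v`. -/
def dfaPowerOrbit {α Q : Type*} (M : DFA α Q) (u v : List α) : Set Q :=
  range fun m : ℕ => M.eval (u ++ (List.replicate m v).flatten)

theorem dfa_power_exponents_eventually_periodic_general {α Q : Type*} (M : DFA α Q)
    (u v : List α) (hfin : (dfaPowerOrbit M u v).Finite) :
    ∃ (N p : ℕ) (R : Finset ℕ), 1 ≤ p ∧ N + p ≤ (dfaPowerOrbit M u v).ncard ∧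
      (∀ r ∈ R, r < p) ∧ R.card ≤ (M.accept ∩ dfaPowerOrbit M u v).ncard ∧
      ∀ m : ℕ, N ≤ m →
        (u ++ (List.replicate m v).flatten ∈ M.accepts ↔ m % p ∈ R) := by
  simp only [dfaPowerOrbit, DFA.mem_accepts, dfa_eval_append_flatten_replicate] at hfin ⊢
  set s : ℕ → Q := fun m => (M.evalFrom · v)^[m] (M.eval u)
  obtain ⟨N, p, hp, hinj, hper⟩ := exists_injOn_iterate_and_isPeriodicPt_of_finite_range hfin
  obtain ⟨R, hRlt, hRcard, hR⟩ := exists_finset_mem_iff_mod_mem_of_modEq (P := s ⁻¹' M.accept) hp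
    fun _ _ ha hb hab => iff_of_eq (congrArg (· ∈ M.accept)
      (iterate_eq_iterate_of_modEq hper ha hb hab))
  refine ⟨N, p, R, hp, ?_, hRlt, ?_, hR⟩
  · calc N + p = (s '' Iio (N + p)).ncard := by rw [hinj.ncard_image, ncard_Iio_nat]
      _ ≤ (range s).ncard := ncard_le_ncard (image_subset_range _ _) hfin
  · rw [hRcard]
    exact ncard_le_ncard_of_injOn s (fun m hm => ⟨hm.1, mem_range_self m⟩)
      (hinj.mono fun m hm => hm.2.2) (hfin.inter_of_right _)

/-- The set of exponents `m` with `u ++ v^m` accepted by a DFA is eventually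
periodic, with preperiod-plus-period at most `|Q|` and at most `|F|` accepted
residues per period. -/
theorem dfa_power_exponents_eventually_periodic {α Q : Type*} [Fintype Q]
    (M : DFA α Q) (u v : List α) :
    ∃ (N p : ℕ) (R : Finset ℕ), 1 ≤ p ∧ N + p ≤ Fintype.card Q ∧
      (∀ r ∈ R, r < p) ∧ R.card ≤ M.accept.ncard ∧
      ∀ m : ℕ, N ≤ m →
        (u ++ (List.replicate m v).flatten ∈ M.accepts ↔ m % p ∈ R) := by
  obtain ⟨N, p, R, hp, hNp, hRlt, hRcard, hR⟩ :=
    dfa_power_exponents_eventually_periodic_general M u v (toFinite _)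
  exact ⟨N, p, R, hp, hNp.trans (Nat.card_eq_fintype_card (α := Q) ▸ ncard_le_card _), hRlt,
    hRcard.trans (ncard_inter_le_ncard_left _ _), hR⟩
end

section
/- For all natural numbers a₁, d₁, a₂, d₂ and all finite sets F₁, F₂ of natural numbers, there exist a natural number a, a natural number d, and a finite set F of natural numbers such that {a₁ + d₁·i + f : i ∈ ℕ, f ∈ F₁} ∩ {a₂ + d₂·i + f : i ∈ ℕ, f ∈ F₂} = {a + d·i + f : i ∈ ℕ, f ∈ F}. -/
/-!
A linear set is a finite union of arithmetic progressions with a common difference, so it suffices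
to intersect two progressions `a + dℕ` and `b + eℕ`. If they meet and `m` is their least common
element, then `n ≥ m` is a common element iff both `d` and `e` divide `n - m`; hence the
intersection is `m + lcm(d, e)ℕ`. The difference `lcm(d, e)` does not depend on `a` and `b`, so the
progressions arising from all pairs of pieces again form a linear set.
-/

/-- The arithmetic progression `a + dℕ`, the building block of linear sets. The difference `d = 0`
is allowed and gives `{a}`. -/
def progression (a d : ℕ) : Set ℕ :=
  {n | ∃ i, n = a + d * i}

theorem left_mem_progression (a d : ℕ) : a ∈ progression a d :=
  ⟨0, rfl⟩

theorem le_of_mem_progression {a d n : ℕ} (hn : n ∈ progression a d) : a ≤ n := by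
  obtain ⟨i, rfl⟩ := hn
  exact Nat.le_add_right a (d * i)

theorem mem_progression_iff_dvd_sub {a d m n : ℕ} (hm : m ∈ progression a d) (hmn : m ≤ n) :
    n ∈ progression a d ↔ d ∣ n - m := by
  obtain ⟨j, rfl⟩ := hm
  obtain ⟨k, rfl⟩ := Nat.exists_eq_add_of_le hmn
  rw [Nat.add_sub_cancel_left]
  constructor
  · rintro ⟨i, hi⟩
    have hsum : d * j + k = d * i := by omega
    exact (Nat.dvd_add_right (dvd_mul_right d j)).mp ⟨i, hsum⟩
  · rintro ⟨i, rfl⟩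
    exact ⟨j + i, by ring⟩

theorem progression_inter_of_isLeast {a d b e m : ℕ}
    (hm : IsLeast (progression a d ∩ progression b e) m) :
    progression a d ∩ progression b e = progression m (d.lcm e) := by
  obtain ⟨⟨hma, hmb⟩, hmin⟩ := hm
  ext n
  rcases le_or_gt m n with hmn | hnm
  · rw [Set.mem_inter_iff, mem_progression_iff_dvd_sub hma hmn,
      mem_progression_iff_dvd_sub hmb hmn,
      mem_progression_iff_dvd_sub (left_mem_progression m _) hmn, Nat.lcm_dvd_iff]
  · exact iff_of_false (fun hn => hnm.not_ge (hmin hn))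
      fun hn => hnm.not_ge (le_of_mem_progression hn)

theorem exists_finset_progression_inter_eq_biUnion (a d b e : ℕ) :
    ∃ G : Finset ℕ,
      progression a d ∩ progression b e = ⋃ m ∈ G, progression m (d.lcm e) := by
  rcases (progression a d ∩ progression b e).eq_empty_or_nonempty with hempty | hne
  · exact ⟨∅, by simp [hempty]⟩
  · exact ⟨{sInf (progression a d ∩ progression b e)}, by
      simpa using progression_inter_of_isLeast (isLeast_csInf hne)⟩

theorem setOf_linear_eq_biUnion_progression (a d : ℕ) (F : Finset ℕ) :
    {n : ℕ | ∃ i : ℕ, ∃ f ∈ F, n = a + d * i + f} = ⋃ f ∈ F, progression (a + f) d := by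
  ext n
  simp only [progression, Set.mem_ofPred_eq, Set.mem_iUnion, exists_prop, add_right_comm a]
  exact ⟨fun ⟨i, f, hf, hn⟩ => ⟨f, hf, i, hn⟩, fun ⟨f, hf, i, hn⟩ => ⟨i, f, hf, hn⟩⟩

/-- Linear subsets of ℕ of the form `{a + d·i + f : i ∈ ℕ, f ∈ F}` (with `F` a
finite set) are closed under intersection. -/
theorem linear_sets_inter (a₁ d₁ a₂ d₂ : ℕ) (F₁ F₂ : Finset ℕ) :
    ∃ (a d : ℕ) (F : Finset ℕ),
      {n : ℕ | ∃ i : ℕ, ∃ f ∈ F₁, n = a₁ + d₁ * i + f} ∩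
        {n : ℕ | ∃ i : ℕ, ∃ f ∈ F₂, n = a₂ + d₂ * i + f} =
      {n : ℕ | ∃ i : ℕ, ∃ f ∈ F, n = a + d * i + f} := by
  choose G hG using fun f₁ f₂ =>
    exists_finset_progression_inter_eq_biUnion (a₁ + f₁) d₁ (a₂ + f₂) d₂
  refine ⟨0, d₁.lcm d₂, F₁.biUnion fun f₁ => F₂.biUnion (G f₁), ?_⟩
  simp only [setOf_linear_eq_biUnion_progression]
  calc (⋃ f₁ ∈ F₁, progression (a₁ + f₁) d₁) ∩ ⋃ f₂ ∈ F₂, progression (a₂ + f₂) d₂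
    _ = ⋃ f₁ ∈ F₁, ⋃ f₂ ∈ F₂, progression (a₁ + f₁) d₁ ∩ progression (a₂ + f₂) d₂ := by
      simp_rw [Set.iUnion₂_inter, Set.inter_iUnion₂]
    _ = ⋃ f₁ ∈ F₁, ⋃ f₂ ∈ F₂, ⋃ m ∈ G f₁ f₂, progression m (d₁.lcm d₂) := by
      simp only [hG]
    _ = ⋃ m ∈ F₁.biUnion fun f₁ => F₂.biUnion (G f₁), progression (0 + m) (d₁.lcm d₂) := by
      simp only [Finset.set_biUnion_biUnion, zero_add]
end

section
/- Let α be a type with decidable equality, let X and W be lists over α, and let i be a natural number with i < W.length. Define S = {j : ℕ | j ≤ i ∧ i < j + X.length ∧ j + X.length ≤ W.length ∧ (W.drop j).take X.length = X}, the set of starting positions of occurrences of X in W that contain the position i. If S is nonempty, then there exist natural numbers d, k, l such that S = {l + t·d : t ∈ {0, 1, …, k}}, i.e. S is an arithmetic progression. -/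
/-!
Two occurrences of `X` at distance `p` give `X` the period `p`. If three occurrences, with
consecutive distances `p` and `q`, share a position, then `p + q < |X|`, so by Fine and Wilf `X` has
the period `gcd p q`. This period extends to the factor covered by the outer two occurrences, hence
`X` occurs at every multiple of `gcd p q` between them. In a set of positions with this closure
property, let `d` be the distance from the least element to the next one: if some element lies at
distance `d + q` from the least, some element lies at distance `gcd d q`, so `gcd d q = d` by
minimality and `d ∣ q`.
-/

theorem gcd_le_add (p q : ℕ) : p.gcd q ≤ p + q := by
  rcases p.eq_zero_or_pos with rfl | hp
  · simp
  · exact (Nat.gcd_le_left q hp).trans (Nat.le_add_right p q)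

theorem exists_mem_forall_dvd_of_gcd_mem {T : Set ℕ} (hne : T.Nonempty)
    (hgcd : ∀ p q, p ∈ T → p + q ∈ T → p.gcd q ∈ T) : ∃ d ∈ T, ∀ n ∈ T, d ∣ n := by
  by_cases hpos : ∃ d, 0 < d ∧ d ∈ T
  · obtain ⟨d, ⟨hd, hdT⟩, hmin⟩ := exists_minimal_of_wellFoundedLT _ hpos
    refine ⟨d, hdT, fun n hn => ?_⟩
    rcases n.eq_zero_or_pos with rfl | hn₀
    · exact dvd_zero d
    have hdn : d ≤ n := (le_total d n).elim id (hmin ⟨hn₀, hn⟩)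
    obtain ⟨q, rfl⟩ := Nat.exists_eq_add_of_le hdn
    have hle : d.gcd q ≤ d := Nat.gcd_le_left q hd
    have hge : d ≤ d.gcd q := hmin ⟨Nat.gcd_pos_of_pos_left q hd, hgcd d q hdT hn⟩ hle
    have hdvd : d ∣ q := Nat.gcd_eq_left_iff_dvd.mp (hle.antisymm hge)
    exact Nat.dvd_add_self_left.mpr hdvd
  · have eq_zero {n : ℕ} (hn : n ∈ T) : n = 0 :=
      n.eq_zero_or_pos.resolve_right fun hn₀ => hpos ⟨n, hn₀, hn⟩
    obtain ⟨d, hd⟩ := hne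
    exact ⟨d, hd, fun n hn => by rw [eq_zero hn]; exact dvd_zero d⟩

theorem exists_eq_arith_progression_of_gcd_dvd {S : Set ℕ} (hne : S.Nonempty) (hbdd : BddAbove S)
    (hgcd : ∀ a p q n, a ∈ S → a + p ∈ S → a + (p + q) ∈ S → p.gcd q ∣ n → n ≤ p + q →
      a + n ∈ S) :
    ∃ d k l : ℕ, S = {n : ℕ | ∃ t : ℕ, t ≤ k ∧ n = l + t * d} := by
  obtain ⟨l, hl, hleast⟩ : ∃ l, IsLeast S l := ⟨sInf S, isLeast_csInf hne⟩
  obtain ⟨m, hm, hgreatest⟩ : ∃ m, IsGreatest S m :=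
    ⟨sSup S, Nat.sSup_mem hne hbdd, fun _ => le_csSup hbdd⟩
  obtain ⟨d, hd, hdvd⟩ : ∃ d, l + d ∈ S ∧ ∀ n, l + n ∈ S → d ∣ n :=
    exists_mem_forall_dvd_of_gcd_mem (T := {n | l + n ∈ S}) ⟨0, hl⟩ fun p q hp hpq =>
      hgcd l p q _ hl hp hpq dvd_rfl (gcd_le_add p q)
  obtain ⟨N, rfl⟩ := Nat.exists_eq_add_of_le (hleast hm)
  refine ⟨d, N / d, l, Set.ext fun b => ⟨fun hb => ?_, ?_⟩⟩
  · obtain ⟨n, rfl⟩ := Nat.exists_eq_add_of_le (hleast hb)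
    have hn : n ≤ N := Nat.add_le_add_iff_left.mp (hgreatest hb)
    -- If `d = 0`, then `n = 0` and the index `n / d` is `0`.
    exact ⟨n / d, Nat.div_le_div_right hn, by rw [Nat.div_mul_cancel (hdvd n hb)]⟩
  · rintro ⟨t, ht, rfl⟩
    have htd : t * d ≤ N := Nat.mul_le_of_le_div d t N ht
    obtain ⟨q, rfl⟩ := Nat.exists_eq_add_of_le (Nat.add_le_add_iff_left.mp (hgreatest hd))
    exact hgcd l d q _ hl hd hm ((Nat.gcd_dvd_left d q).trans (dvd_mul_left d t)) htd

section Words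

variable {α : Type*} {X U : List α} {p q n : ℕ}

theorem hasPeriod_of_dvd (hX : X.HasPeriod p) (hpq : p ∣ q) : X.HasPeriod q := by
  rw [List.hasPeriod_iff_forall_getElem?_mod]
  intro i hi
  calc
    X[i]? = X[i % p]? := (hX.getElem?_mod p i X hi).symm
    _ = X[i % q % p]? := by rw [Nat.mod_mod_of_dvd i hpq]
    _ = X[i % q]? := hX.getElem?_mod p _ X ((Nat.mod_le i q).trans_lt hi)

theorem hasPeriod_of_isPrefix_drop (h₀ : X <+: U) (hp : X <+: U.drop p) : X.HasPeriod p := by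
  have hdrop : X.drop p <+: X := List.prefix_of_prefix_length_le (h₀.drop p) hp (by simp)
  simpa only [List.HasPeriod, List.take_append_drop] using
    (List.prefix_append_right_inj (X.take p)).mpr hdrop

theorem isPrefix_drop_of_hasPeriod (hX : X.HasPeriod p) (hpq : p ∣ q) (hq : q ≤ X.length)
    (h₀ : X <+: U) (hqU : X <+: U.drop q) (hpn : p ∣ n) (hn : n ≤ q) : X <+: U.drop n := by
  have hcover : X.take q ++ X <+: U := by
    have htake : X.take q = U.take q := by
      obtain ⟨V, rfl⟩ := h₀
      exact (List.take_append_of_le_length hq).symm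
    simpa only [htake, List.take_append_drop] using
      (List.prefix_append_right_inj (U.take q)).mpr hqU
  have hdrop : (X.take q ++ X).drop n <+: X.take q ++ X :=
    (hasPeriod_of_dvd (hX.take_append p q X hpq hq) hpn).drop_prefix n
  have hXdrop : X <+: (X.take q ++ X).drop n :=
    List.prefix_of_prefix_length_le h₀ (hdrop.trans hcover) (by
      simp only [List.length_drop, List.length_append, List.length_take]
      omega)
  exact hXdrop.trans (hcover.drop n)

theorem isPrefix_drop_of_gcd_dvd (h₀ : X <+: U) (hp : X <+: U.drop p)
    (hpq : X <+: U.drop (p + q)) (hlen : p + q ≤ X.length) (hdvd : p.gcd q ∣ n)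
    (hn : n ≤ p + q) : X <+: U.drop n := by
  have period_p : X.HasPeriod p := hasPeriod_of_isPrefix_drop h₀ hp
  have period_q : X.HasPeriod q := hasPeriod_of_isPrefix_drop hp (by rwa [List.drop_drop])
  exact isPrefix_drop_of_hasPeriod (period_p.gcd period_q (by omega))
    (dvd_add (Nat.gcd_dvd_left p q) (Nat.gcd_dvd_right p q)) hlen h₀ hpq hdvd hn

end Words

/-- Crossing appearances: the set of starting positions of occurrences of `X`
in `W` containing a fixed position `i` is an arithmetic progression. -/
theorem crossing_occurrences_arith_progression {α : Type*} [DecidableEq α]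
    (X W : List α) (i : ℕ) (hi : i < W.length)
    (hne : {j : ℕ | j ≤ i ∧ i < j + X.length ∧ j + X.length ≤ W.length ∧
        (W.drop j).take X.length = X}.Nonempty) :
    ∃ d k l : ℕ,
      {j : ℕ | j ≤ i ∧ i < j + X.length ∧ j + X.length ≤ W.length ∧
        (W.drop j).take X.length = X} =
      {n : ℕ | ∃ t : ℕ, t ≤ k ∧ n = l + t * d} := by
  have take_drop_eq_iff (j : ℕ) : (W.drop j).take X.length = X ↔ X <+: W.drop j := by
    rw [List.prefix_iff_eq_take, eq_comm]
  simp only [take_drop_eq_iff] at hne ⊢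
  refine exists_eq_arith_progression_of_gcd_dvd hne ⟨i, fun j hj => hj.1⟩ ?_
  rintro a p q n ⟨-, hia, -, occ_a⟩ ⟨-, -, -, occ_p⟩ ⟨hpq, -, hpqW, occ_pq⟩ hdvd hn
  refine ⟨by omega, by omega, by omega, ?_⟩
  rw [← List.drop_drop] at occ_p occ_pq ⊢
  exact isPrefix_drop_of_gcd_dvd occ_a occ_p occ_pq (by omega) hdvd hn
end

section
/- Let V and E be finite types, let s, t : E → V, and let ι : E → E be an involution (ι ∘ ι = id) satisfying s(ι e) = t e and t(ι e) = s e for all e ∈ E (a finite directed multigraph with an orientation-reversing involution on edges). For v ∈ V set indeg v = |{e : t e = v}| and outdeg v = |{e : s e = v}|, let q₀ ∈ V, let F be a finite set of vertices, and let ∂ = {v : indeg v = 1 ∧ outdeg v = 1}. Assume that every vertex has outdeg ≥ 1, and that every vertex v with v ≠ q₀ and v ∉ F satisfies indeg v ≥ 3 or outdeg v ≥ 3. Then |E| ≤ 3·max(0, |E| − 2·|V|) + 2·|F| + 2·|∂| + 2 and |V| ≤ max(0, |E| − 2·|V|) + |F| + |∂| + 1. -/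
/-!
The involution exchanges the edges entering a vertex with those leaving it, so in- and out-degrees
agree. Give a vertex of degree `d` the charge `d`, plus `1` if it is `q₀` or lies in `F`, plus `1`
if `d = 1`: every charge is at least `3`, and summing gives `3|V| ≤ |E| + |F| + |∂| + 1`. Both
inequalities, even with `max 0 x` replaced by `x`, are rearrangements of this one.
-/

section

open Finset

theorem three_mul_card_le_sum_add_card_add_card {V : Type*} [Fintype V] (d : V → ℕ) (S : Finset V)
    (hpos : ∀ v, 1 ≤ d v) (hthree : ∀ v ∉ S, 3 ≤ d v) :
    3 * Fintype.card V ≤ ∑ v, d v + #S + #{v | d v = 1} := by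
  classical
  have three_le_charge (v : V) :
      3 ≤ d v + (if v ∈ S then 1 else 0) + (if d v = 1 then 1 else 0) := by
    have hpos_v := hpos v
    have hthree_v := hthree v
    split_ifs <;> grind
  calc 3 * Fintype.card V = ∑ _v : V, 3 := by simp [mul_comm]
    _ ≤ ∑ v, (d v + (if v ∈ S then 1 else 0) + (if d v = 1 then 1 else 0)) :=
      sum_le_sum fun v _ => three_le_charge v
    _ = ∑ v, d v + #S + #{v | d v = 1} := by simp [sum_add_distrib]

theorem card_fiber_eq_of_bijective {α β γ : Type*} [Fintype α] [Fintype β] [DecidableEq γ]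
    {f : α → γ} {g : β → γ} {φ : α → β} (hφ : φ.Bijective) (hg : ∀ a, g (φ a) = f a) (c : γ) :
    #{a | f a = c} = #{b | g b = c} :=
  card_bijective φ hφ (by simp [hg])

theorem minimalistic_involutive_graph_bounds_general {V E : Type*} [Fintype V] [Fintype E]
    [DecidableEq V] (s t : E → V) (hbal : ∀ v, #{e | t e = v} = #{e | s e = v})
    (q₀ : V) (F : Finset V) (hout : ∀ v, 1 ≤ #{e | s e = v})
    (hmin : ∀ v, v ≠ q₀ → v ∉ F → 3 ≤ #{e | t e = v} ∨ 3 ≤ #{e | s e = v}) :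
    3 * Fintype.card V ≤
      Fintype.card E + #F + #{v | #{e | t e = v} = 1 ∧ #{e | s e = v} = 1} + 1 := by
  simp only [hbal, or_self, and_self] at hmin ⊢
  have hthree : ∀ v ∉ insert q₀ F, 3 ≤ #{e | s e = v} := fun v hv =>
    have ⟨hq, hF⟩ := not_or.mp (mt mem_insert.mpr hv)
    hmin v hq hF
  have hsum : Fintype.card E = ∑ v, #{e | s e = v} :=
    card_eq_sum_card_fiberwise fun _ _ => mem_coe.mpr (mem_univ _)
  have hcharge := three_mul_card_le_sum_add_card_add_card _ _ hout hthree
  have hinsert := card_insert_le q₀ F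
  omega

end

/-- Counting lemma for minimalistic involutive graphs (Lemma 5.6):
bounds on the numbers of edges and vertices. -/
theorem minimalistic_involutive_graph_bounds
    {V E : Type*} [Fintype V] [Fintype E] [DecidableEq V]
    (s t : E → V) (ι : E → E)
    (hinv : ∀ e, ι (ι e) = e)
    (hs : ∀ e, s (ι e) = t e) (ht : ∀ e, t (ι e) = s e)
    (q₀ : V) (F : Finset V)
    (hout : ∀ v : V, 1 ≤ (Finset.univ.filter fun e => s e = v).card)
    (hmin : ∀ v : V, v ≠ q₀ → v ∉ F →
      3 ≤ (Finset.univ.filter fun e => t e = v).card ∨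
      3 ≤ (Finset.univ.filter fun e => s e = v).card) :
    (Fintype.card E : ℤ) ≤
        3 * max 0 ((Fintype.card E : ℤ) - 2 * Fintype.card V) + 2 * F.card +
          2 * (Finset.univ.filter fun v : V =>
            (Finset.univ.filter fun e => t e = v).card = 1 ∧
            (Finset.univ.filter fun e => s e = v).card = 1).card + 2 ∧
    (Fintype.card V : ℤ) ≤
        max 0 ((Fintype.card E : ℤ) - 2 * Fintype.card V) + F.card +
          (Finset.univ.filter fun v : V =>
            (Finset.univ.filter fun e => t e = v).card = 1 ∧
            (Finset.univ.filter fun e => s e = v).card = 1).card + 1 := by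
  have hbound := minimalistic_involutive_graph_bounds_general s t
    (card_fiber_eq_of_bijective (Function.Involutive.bijective hinv) hs) q₀ F hout hmin
  omega
end

section
/- Let α be a finite type with decidable equality and let S be a finite subset of the free group FreeGroup α; let H be the subgroup of FreeGroup α generated by S. Then there exist a finite type Q and a deterministic finite automaton M over the alphabet α × Bool with state type Q such that the language accepted by M equals {w : List (α × Bool) | FreeGroup.reduce w = w ∧ FreeGroup.mk w ∈ H}, the set of freely reduced words representing elements of H. -/
/-!
For a reduced word `u`, the right coset `H * mk u` and the last letter of `u` together determine
which words `v` make `u ++ v` a reduced word of an element of `H`. By Myhill–Nerode it therefore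
suffices that the prefixes of reduced words of elements of `H` realise only finitely many such pairs
(states). Suppose `H` is generated by a finite set `S`. Concatenating two words of elements of `H`
creates no new state, because the first word leads back to the coset `H`; cancelling `a a⁻¹` creates
none either, because it does not change the element spelled. Hence only the finitely many states
visited by the reduced words of `1` and of the elements of `S ∪ S⁻¹` occur.
-/

section Stallings

open FreeGroup

theorem prefix_or_exists_of_prefix_append {β : Type*} {p l₁ l₂ : List β}
    (h : p <+: l₁ ++ l₂) :
    p <+: l₁ ∨ ∃ q ≠ [], q <+: l₂ ∧ p = l₁ ++ q := by
  rcases List.prefix_or_prefix_of_prefix h (List.prefix_append l₁ l₂) with hp | ⟨q, rfl⟩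
  · exact .inl hp
  · rcases eq_or_ne q [] with rfl | hq
    · exact .inl (by simp)
    · exact .inr ⟨q, hq, (List.prefix_append_right_inj l₁).mp h, rfl⟩

variable {α : Type*} {H : Subgroup (FreeGroup α)} {u v w : List (α × Bool)}

/-- The language of reduced words of elements of `H`. -/
def reducedWords (H : Subgroup (FreeGroup α)) : Language (α × Bool) :=
  {w | FreeGroup.IsReduced w ∧ mk w ∈ H}

/-- The state of the Stallings automaton of `H` after reading `w`: a vertex of the Schreier graph of
`H`, encoded as a right coset, and the letter labelling the edge just traversed (`none` initially).
The letter is recorded so that a word can be rejected as soon as it backtracks. -/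
def stallingsState (H : Subgroup (FreeGroup α)) (w : List (α × Bool)) :
    Quotient (QuotientGroup.rightRel H) × Option (α × Bool) :=
  (Quotient.mk _ (mk w), w.getLast?)

/-- The states through which the Stallings automaton of `H` passes while reading `w`. -/
def visitedStates (H : Subgroup (FreeGroup α)) (w : List (α × Bool)) :
    Set (Quotient (QuotientGroup.rightRel H) × Option (α × Bool)) :=
  stallingsState H '' {p | p <+: w}

theorem stallingsState_eq_iff :
    stallingsState H u = stallingsState H v ↔
      mk v * (mk u)⁻¹ ∈ H ∧ u.getLast? = v.getLast? := by
  rw [stallingsState, stallingsState, Prod.mk.injEq, Quotient.eq, QuotientGroup.rightRel_apply]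

theorem stallingsState_append_congr (h : mk v * (mk u)⁻¹ ∈ H) (hw : w ≠ []) :
    stallingsState H (u ++ w) = stallingsState H (v ++ w) := by
  rw [stallingsState_eq_iff, List.getLast?_append_of_ne_nil _ hw,
    List.getLast?_append_of_ne_nil _ hw, ← mul_mk, ← mul_mk]
  exact ⟨by simpa only [mul_inv_rev, mul_assoc, mul_inv_cancel_left] using h, rfl⟩

theorem leftQuotient_reducedWords_congr (hu : FreeGroup.IsReduced u) (hv : FreeGroup.IsReduced v)
    (h : stallingsState H u = stallingsState H v) :
    (reducedWords H).leftQuotient u = (reducedWords H).leftQuotient v := by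
  obtain ⟨hcoset, hlast⟩ := stallingsState_eq_iff.mp h
  ext w
  have hreduced : FreeGroup.IsReduced (u ++ w) ↔ FreeGroup.IsReduced (v ++ w) := by
    simp only [FreeGroup.IsReduced, List.isChain_append, hlast] at hu hv ⊢
    simp only [hu, hv]
  have hmem : mk (u ++ w) ∈ H ↔ mk (v ++ w) ∈ H := by
    rw [← H.mul_mem_cancel_left hcoset, ← mul_mk, ← mul_mk, mul_assoc, inv_mul_cancel_left]
  exact and_congr hreduced hmem

theorem finite_visitedStates (H : Subgroup (FreeGroup α)) (w : List (α × Bool)) :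
    (visitedStates H w).Finite := by
  have hprefixes : {p | p <+: w}.Finite := by
    simpa only [List.mem_inits] using w.inits.finite_toSet
  exact hprefixes.image _

theorem isRegular_reducedWords_of_finite_biUnion
    (h : (⋃ w ∈ reducedWords H, visitedStates H w).Finite) : (reducedWords H).IsRegular := by
  set L := reducedWords H
  let P : Set (List (α × Bool)) := ⋃ w ∈ L, {p | p <+: w}
  have hP : (stallingsState H '' P).Finite := by
    simpa only [P, Set.image_iUnion₂, visitedStates] using h
  have hPreduced : ∀ p ∈ P, FreeGroup.IsReduced p := by
    intro p hp
    obtain ⟨w, hw, hpw⟩ := Set.mem_iUnion₂.mp hp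
    exact hw.1.infix hpw.isInfix
  obtain ⟨R, hRP, hR⟩ := Set.exists_subset_bijOn P (stallingsState H)
  have hRfin : R.Finite := hR.finite_iff_finite.mpr hP
  refine Language.IsRegular.of_finite_range_leftQuotient
    (((hRfin.image L.leftQuotient).insert 0).subset ?_)
  rintro _ ⟨u, rfl⟩
  rcases Set.eq_empty_or_nonempty (L.leftQuotient u) with hempty | ⟨v, hv⟩
  · exact .inl hempty
  · have huP : u ∈ P := Set.mem_biUnion hv (List.prefix_append u v)
    obtain ⟨r, hrR, hr⟩ := hR.surjOn (Set.mem_image_of_mem _ huP)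
    have hcongr := leftQuotient_reducedWords_congr (hPreduced r (hRP hrR)) (hPreduced u huP) hr
    exact .inr ⟨r, hrR, hcongr⟩

theorem visitedStates_append_subset (hu : mk u ∈ H) :
    visitedStates H (u ++ v) ⊆ visitedStates H u ∪ visitedStates H v := by
  rintro _ ⟨p, hp, rfl⟩
  rcases prefix_or_exists_of_prefix_append hp with hpu | ⟨q, hq, hqv, rfl⟩
  · exact .inl ⟨p, hpu, rfl⟩
  · have hcoset : mk u * (mk [])⁻¹ ∈ H := by rwa [← one_eq_mk, inv_one, mul_one]
    exact .inr ⟨q, hqv, stallingsState_append_congr hcoset hq⟩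

theorem visitedStates_subset_of_step (h : Red.Step u v) :
    visitedStates H v ⊆ visitedStates H u := by
  obtain @⟨l₁, l₂, a, b⟩ := h
  rintro _ ⟨p, hp, rfl⟩
  rcases prefix_or_exists_of_prefix_append hp with hpl | ⟨q, hq, hql, rfl⟩
  · exact ⟨p, hpl.trans (List.prefix_append _ _), rfl⟩
  · have hcancel : Red.Step (l₁ ++ [(a, b), (a, !b)]) l₁ := by
      simpa only [List.append_nil] using Red.Step.not (L₁ := l₁) (L₂ := [])
    have hmk : mk (l₁ ++ [(a, b), (a, !b)]) = mk l₁ := Quot.sound hcancel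
    refine ⟨l₁ ++ [(a, b), (a, !b)] ++ q, by simpa using hql, stallingsState_append_congr ?_ hq⟩
    rw [hmk, mul_inv_cancel]
    exact H.one_mem

theorem visitedStates_subset_of_red (h : Red u v) : visitedStates H v ⊆ visitedStates H u := by
  induction h with
  | refl => rfl
  | tail _ hstep ih => exact (visitedStates_subset_of_step hstep).trans ih

theorem visitedStates_toWord_mul_subset [DecidableEq α] {g h : FreeGroup α} (hg : g ∈ H) :
    visitedStates H (g * h).toWord ⊆ visitedStates H g.toWord ∪ visitedStates H h.toWord := by
  rw [toWord_mul]
  exact (visitedStates_subset_of_red reduce.red).trans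
    (visitedStates_append_subset (by rwa [mk_toWord]))

theorem visitedStates_toWord_subset_of_mem_closure [DecidableEq α] {S : Set (FreeGroup α)}
    {h : FreeGroup α} (hh : h ∈ Subgroup.closure S) :
    visitedStates (Subgroup.closure S) h.toWord ⊆
      ⋃ g ∈ insert 1 (S ∪ S⁻¹), visitedStates (Subgroup.closure S) g.toWord := by
  set V := ⋃ g ∈ insert 1 (S ∪ S⁻¹), visitedStates (Subgroup.closure S) g.toWord
  have hgen : ∀ g ∈ insert 1 (S ∪ S⁻¹), visitedStates (Subgroup.closure S) g.toWord ⊆ V :=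
    fun _ ↦ Set.subset_biUnion_of_mem
      (u := fun g : FreeGroup α ↦ visitedStates (Subgroup.closure S) g.toWord)
  induction hh using Subgroup.closure_induction_left with
  | one => exact hgen 1 (.inl rfl)
  | mul_left s hs g _ ih =>
    exact (visitedStates_toWord_mul_subset (Subgroup.subset_closure hs)).trans
      (Set.union_subset (hgen s (.inr (.inl hs))) ih)
  | inv_mul_cancel s hs g _ ih =>
    exact (visitedStates_toWord_mul_subset (inv_mem (Subgroup.subset_closure hs))).trans
      (Set.union_subset (hgen s⁻¹ (.inr (.inr (Set.inv_mem_inv.mpr hs)))) ih)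

theorem finite_biUnion_visitedStates_of_fg (hH : H.FG) :
    (⋃ w ∈ reducedWords H, visitedStates H w).Finite := by
  classical
  obtain ⟨S, rfl⟩ := hH
  have hgen : (insert 1 ((S : Set (FreeGroup α)) ∪ (S : Set (FreeGroup α))⁻¹)).Finite :=
    (S.finite_toSet.union S.finite_toSet.inv).insert 1
  refine (hgen.biUnion fun g _ ↦ finite_visitedStates _ g.toWord).subset
    (Set.iUnion₂_subset fun w ⟨hw, hwH⟩ ↦ ?_)
  simpa only [toWord_mk, hw.reduce_eq] using visitedStates_toWord_subset_of_mem_closure hwH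

theorem isRegular_reducedWords (hH : H.FG) : (reducedWords H).IsRegular :=
  isRegular_reducedWords_of_finite_biUnion (finite_biUnion_visitedStates_of_fg hH)

end Stallings

theorem exists_stallings_automaton_general {α : Type*} [DecidableEq α] (S : Finset (FreeGroup α)) :
    ∃ (Q : Type) (_ : Fintype Q) (M : DFA (α × Bool) Q),
      M.accepts = {w : List (α × Bool) | FreeGroup.reduce w = w ∧
        FreeGroup.mk w ∈ Subgroup.closure (S : Set (FreeGroup α))} := by
  simpa only [Language.IsRegular, reducedWords, FreeGroup.isReduced_iff_reduce_eq] using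
    isRegular_reducedWords ⟨S, rfl⟩

/-- Stallings automata: every finitely generated subgroup of a free group has a
finite deterministic automaton recognising exactly the freely reduced words of
its elements. -/
theorem exists_stallings_automaton {α : Type*} [Fintype α] [DecidableEq α]
    (S : Finset (FreeGroup α)) :
    ∃ (Q : Type) (_ : Fintype Q) (M : DFA (α × Bool) Q),
      M.accepts = {w : List (α × Bool) | FreeGroup.reduce w = w ∧
        FreeGroup.mk w ∈ Subgroup.closure (S : Set (FreeGroup α))} :=
  exists_stallings_automaton_general S
end

section
/- Let α be a finite type with decidable equality and let N be a nondeterministic finite automaton over the alphabet α × Bool with finite state type, whose transition relation is involutive in the sense that for all states p, q, all a : α and all b : Bool, q ∈ N.step p (a, b) if and only if p ∈ N.step q (a, !b). Then there exist a finite type Q and a deterministic finite automaton M over α × Bool with state type Q such that every word accepted by M is freely reduced (FreeGroup.reduce w = w) and such that the image under FreeGroup.mk of the language of M equals the image under FreeGroup.mk of the language of N. -/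
/-!
By Benois' theorem, free reduction preserves regularity over a finite alphabet. Cancelling inverse
pairs down to `x ++ y` means cancelling a prefix down to `x` and the remaining suffix down to `y`,
so the left quotient by `x` of the set of all descendants of `L` is determined by a set of left
quotients of `L`, of which there are finitely many; the freely reduced words among the descendants
are then cut out by a local condition on adjacent letters. A deterministic automaton for them has
the required language, since free reduction does not change the element of the free group.
-/

section Regular

variable {α β : Type*}

theorem isRegular_of_leftQuotient_factorsThrough {L : Language α} {f : List α → β}
    (hf : (Set.range f).Finite) (hL : L.leftQuotient.FactorsThrough f) : L.IsRegular := by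
  obtain ⟨g, hg⟩ := (Function.factorsThrough_iff _).mp hL
  apply Language.IsRegular.of_finite_range_leftQuotient
  rw [hg, Set.range_comp]
  exact hf.image g

theorem isRegular_setOf_isChain [Finite α] (R : α → α → Prop) :
    Language.IsRegular {w : List α | w.IsChain R} := by
  refine isRegular_of_leftQuotient_factorsThrough
    (f := fun w : List α ↦ (w.IsChain R, w.getLast?)) (Set.toFinite _) fun x y hxy ↦ ?_
  obtain ⟨hchain, hlast⟩ := Prod.mk.inj hxy
  ext z
  change (x ++ z).IsChain R ↔ (y ++ z).IsChain R
  rw [List.isChain_append, List.isChain_append, hchain, hlast]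

theorem isRegular_nfa_accepts {σ : Type*} [Finite σ] (N : NFA α σ) : N.accepts.IsRegular := by
  have := Fintype.ofFinite (Set σ)
  exact Language.isRegular_iff.mpr ⟨Set σ, this, N.toDFA, N.toDFA_correct⟩

end Regular

section FreeReduction

variable {α : Type*}

/-- The language of all words obtained from words of `L` by cancelling adjacent inverse letters, not
necessarily exhaustively: the descendants of `L` under the rewriting relation `FreeGroup.Red`. Its
left quotients, unlike those of the freely reduced words, are again languages of this form. -/
def freeDescendants (L : Language (α × Bool)) : Language (α × Bool) :=
  {w | ∃ v ∈ L, FreeGroup.Red v w}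

theorem leftQuotient_freeDescendants (L : Language (α × Bool)) (x : List (α × Bool)) :
    (freeDescendants L).leftQuotient x =
      freeDescendants (sSup (L.leftQuotient '' {u | FreeGroup.Red u x})) := by
  ext y
  constructor
  · rintro ⟨_, hL, hred⟩
    obtain ⟨u, v, rfl, hu, hv⟩ := FreeGroup.Red.to_append_iff.mp hred
    exact ⟨v, ⟨_, ⟨u, hu, rfl⟩, hL⟩, hv⟩
  · rintro ⟨v, ⟨_, ⟨u, hu, rfl⟩, hL⟩, hv⟩
    exact ⟨u ++ v, hL, FreeGroup.Red.append_append hu hv⟩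

theorem isRegular_freeDescendants {L : Language (α × Bool)} (hL : L.IsRegular) :
    (freeDescendants L).IsRegular := by
  refine isRegular_of_leftQuotient_factorsThrough
    (f := fun x ↦ L.leftQuotient '' {u | FreeGroup.Red u x}) ?_ fun x y hxy ↦ ?_
  · refine hL.finite_range_leftQuotient.finite_subsets.subset ?_
    rintro _ ⟨x, rfl⟩
    exact Set.image_subset_range _ _
  · rw [leftQuotient_freeDescendants, leftQuotient_freeDescendants]
    exact congrArg (fun K ↦ freeDescendants (sSup K)) hxy

variable [DecidableEq α]

/-- The language of the free reductions of the words of `L`. Unlike `freeDescendants L`, it contains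
only fully reduced words. -/
def freeReduction (L : Language (α × Bool)) : Language (α × Bool) :=
  {w | ∃ v ∈ L, FreeGroup.reduce v = w}

theorem reduce_eq_of_mem_freeReduction {L : Language (α × Bool)} {w : List (α × Bool)}
    (hw : w ∈ freeReduction L) : FreeGroup.reduce w = w := by
  obtain ⟨v, -, rfl⟩ := hw
  exact FreeGroup.reduce.idem

theorem mk_image_freeReduction (L : Language (α × Bool)) :
    FreeGroup.mk '' freeReduction L = FreeGroup.mk '' L := by
  ext g
  constructor
  · rintro ⟨_, ⟨v, hv, rfl⟩, rfl⟩
    exact ⟨v, hv, FreeGroup.reduce.self.symm⟩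
  · rintro ⟨v, hv, rfl⟩
    exact ⟨FreeGroup.reduce v, ⟨v, hv, rfl⟩, FreeGroup.reduce.self⟩

theorem freeReduction_eq_freeDescendants_inf (L : Language (α × Bool)) :
    freeReduction L = freeDescendants L ⊓ {w | FreeGroup.IsReduced w} := by
  ext w
  constructor
  · rintro ⟨v, hv, rfl⟩
    exact ⟨⟨v, hv, FreeGroup.reduce.red⟩, .of_reduce_eq FreeGroup.reduce.idem⟩
  · rintro ⟨⟨v, hv, hred⟩, hw⟩
    exact ⟨v, hv, (FreeGroup.reduce.eq_of_red hred).trans hw.reduce_eq⟩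

theorem isRegular_freeReduction [Finite α] {L : Language (α × Bool)} (hL : L.IsRegular) :
    (freeReduction L).IsRegular := by
  rw [freeReduction_eq_freeDescendants_inf]
  exact (isRegular_freeDescendants hL).inf (isRegular_setOf_isChain _)

end FreeReduction

theorem involutive_nfa_to_dfa_general {α σ : Type*} [Finite α] [DecidableEq α] [Finite σ]
    (N : NFA (α × Bool) σ) :
    ∃ (Q : Type) (_ : Fintype Q) (M : DFA (α × Bool) Q),
      (∀ w ∈ M.accepts, FreeGroup.reduce w = w) ∧
      FreeGroup.mk '' M.accepts = FreeGroup.mk '' N.accepts := by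
  obtain ⟨Q, hQ, M, hM⟩ := isRegular_freeReduction (isRegular_nfa_accepts N)
  refine ⟨Q, hQ, M, ?_, ?_⟩
  · rw [hM]
    exact fun _ ↦ reduce_eq_of_mem_freeReduction
  · rw [hM, mk_image_freeReduction]

/-- Involutive NFA to DFA conversion: every involutive automaton over
`α × Bool` can be replaced by a deterministic automaton accepting only freely
reduced words whose language has the same image in the free group. -/
theorem involutive_nfa_to_dfa {α σ : Type*} [Fintype α] [DecidableEq α]
    [Fintype σ] (N : NFA (α × Bool) σ)
    (hinv : ∀ (p q : σ) (a : α) (b : Bool),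
      q ∈ N.step p (a, b) ↔ p ∈ N.step q (a, !b)) :
    ∃ (Q : Type) (_ : Fintype Q) (M : DFA (α × Bool) Q),
      (∀ w ∈ M.accepts, FreeGroup.reduce w = w) ∧
      FreeGroup.mk '' M.accepts = FreeGroup.mk '' N.accepts :=
  involutive_nfa_to_dfa_general N
end
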